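/- Let ρ₀ and ρ₁ be n×n density matrices emitted with probabilities p₀ and p₁ respectively, where p₀ ≥ p₁ > 0 and p₀ + p₁ = 1. For any POVM (E_e)_{e∈F} on ℂⁿ, with p(e|s) = Tr(E_e ρ_s) and p(e) = p₀ p(e|0) + p₁ p(e|1), the mutual information I(E;S) = ∑_{s∈{0,1}} ∑_e p_s p(e|s) log( p(e|s)/p(e) ) satisfies I(E;S) ≤ H(S) · p₀ · ‖ρ₀ - ρ₁‖₁, where H(S) = -p₀ log p₀ - p₁ log p₁. -/

import Mathlib

/-!
Write `a e = p(e|0)`, `b e = p(e|1)`, `q e = p0 * a e + p1 * b e`. The contribution of an outcome to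
the mutual information is a convex, positively homogeneous function of `(a, b)` that vanishes on
the diagonal, so splitting off the common part of `a` and `b` bounds it by `-(p0 log p0) (a - b)`
when `b ≤ a` and by `-(p1 log p1) (b - a)` when `a ≤ b` (`term_le`). Since `a` and `b` have the same
total mass, the positive and the negative part of `a - b` both have mass `D / 2` with
`D = ∑ |a e - b e|`, hence `I ≤ H * D / 2 ≤ H * p0 * D` because `p0 ≥ 1 / 2`. Finally `D` is at most
the trace norm of `ρ0 - ρ1` (`sum_abs_trace_le_traceNorm`), by diagonalising that matrix.
-/

open scoped BigOperators ComplexOrder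

/-- The trace norm of a matrix: for a Hermitian matrix it is the sum of the
absolute values of its (real) eigenvalues; we set it to `0` otherwise. -/
noncomputable def traceNorm {ι : Type*} [Fintype ι] [DecidableEq ι]
    (A : Matrix ι ι ℂ) : ℝ :=
  letI := Classical.dec A.IsHermitian
  if h : A.IsHermitian then ∑ i, |h.eigenvalues i| else 0

open Matrix in
/-- Measuring a Hermitian matrix with a POVM gives a signed vector whose `ℓ¹` norm is at most the
trace norm. -/
lemma sum_abs_trace_le_traceNorm {n : ℕ} {F : Type*} [Fintype F]
    (A : Matrix (Fin n) (Fin n) ℂ) (hA : A.IsHermitian)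
    (E : F → Matrix (Fin n) (Fin n) ℂ)
    (hE : ∀ e, (E e).PosSemidef) (hEsum : ∑ e, E e = 1) :
    ∑ e, |((E e * A).trace).re| ≤ traceNorm A := by
  have htn : traceNorm A = ∑ i, |hA.eigenvalues i| := by
    unfold traceNorm
    simp [hA]
  rw [htn]
  set U : Matrix (Fin n) (Fin n) ℂ := (hA.eigenvectorUnitary : Matrix (Fin n) (Fin n) ℂ) with hU
  have hUU : Uᴴ * U = 1 := by
    have := Unitary.coe_star_mul_self hA.eigenvectorUnitary
    simpa [hU, star_eq_conjTranspose] using this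
  have hspec : A = U * diagonal (fun i => (hA.eigenvalues i : ℂ)) * Uᴴ := by
    have := hA.spectral_theorem
    rw [Unitary.conjStarAlgAut_apply] at this
    exact this
  -- In the eigenbasis of `A` only the diagonal of the measurement operators matters.
  have htr : ∀ e, ((E e * A).trace).re
      = ∑ i, ((Uᴴ * E e * U) i i).re * hA.eigenvalues i := by
    intro e
    have h1 : (E e * A).trace
        = ((Uᴴ * E e * U) * diagonal (fun i => (hA.eigenvalues i : ℂ))).trace := by
      conv_lhs => rw [hspec]
      rw [← Matrix.mul_assoc, Matrix.trace_mul_comm]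
      simp only [Matrix.mul_assoc]
    rw [h1, Matrix.trace, Complex.re_sum]
    refine Finset.sum_congr rfl fun i _ => ?_
    simp [Matrix.mul_diagonal]
  have hpos : ∀ e i, 0 ≤ ((Uᴴ * E e * U) i i).re := by
    intro e i
    have h := ((hE e).conjTranspose_mul_mul_same U).diag_nonneg (i := i)
    exact (Complex.le_def.1 h).1
  have hone : ∀ i, ∑ e, ((Uᴴ * E e * U) i i).re = 1 := by
    intro i
    rw [← Complex.re_sum, ← Matrix.sum_apply, ← Finset.sum_mul, ← Finset.mul_sum, hEsum,
      Matrix.mul_one, hUU]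
    simp
  calc ∑ e, |((E e * A).trace).re|
      ≤ ∑ e, ∑ i, ((Uᴴ * E e * U) i i).re * |hA.eigenvalues i| := by
        refine Finset.sum_le_sum fun e _ => ?_
        rw [htr e]
        refine (Finset.abs_sum_le_sum_abs _ _).trans (le_of_eq ?_)
        refine Finset.sum_congr rfl fun i _ => ?_
        rw [abs_mul, abs_of_nonneg (hpos e i)]
    _ = ∑ i, |hA.eigenvalues i| := by
        rw [Finset.sum_comm]
        refine Finset.sum_congr rfl fun i _ => ?_
        rw [← Finset.sum_mul, hone i, one_mul]

open scoped MatrixOrder Matrix.Norms.L2Operator in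
lemma trace_mul_re_nonneg {n : ℕ} {A B : Matrix (Fin n) (Fin n) ℂ}
    (hA : A.PosSemidef) (hB : B.PosSemidef) : 0 ≤ ((A * B).trace).re := by
  obtain ⟨C, rfl⟩ := CStarAlgebra.nonneg_iff_eq_star_mul_self.1 hB.nonneg
  rw [Matrix.star_eq_conjTranspose]
  have h := (hA.mul_mul_conjTranspose_same C).trace_nonneg
  rw [Matrix.mul_assoc, Matrix.trace_mul_comm, Matrix.mul_assoc] at h
  exact (Complex.le_def.1 h).1

/-- Bound on the contribution of one outcome, where `p` is the prior of the source under
which that outcome is likelier. -/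
lemma term_le_of_le {p r a b : ℝ} (hp : 0 < p) (hr : 0 < r) (hpr : p + r = 1)
    (hb : 0 ≤ b) (hba : b ≤ a) :
    p * a * Real.log (a / (p * a + r * b)) + r * b * Real.log (b / (p * a + r * b))
      ≤ -(p * Real.log p) * (a - b) := by
  rcases (hb.trans hba).eq_or_lt with h0 | ha
  · obtain rfl : b = 0 := by linarith
    simp [← h0]
  have hq : 0 < p * a + r * b := by positivity
  -- Concavity of `log` at `q / a = (b / a) * 1 + ((a - b) / a) * p`.
  have h1 : (a - b) * Real.log p ≤ a * Real.log ((p * a + r * b) / a) := by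
    have h := strictConcaveOn_log_Ioi.concaveOn.2 (Set.mem_Ioi.2 one_pos)
      (Set.mem_Ioi.2 hp) (show 0 ≤ b / a by positivity)
      (show 0 ≤ (a - b) / a from div_nonneg (by linarith) ha.le) (by field_simp; ring)
    simp only [smul_eq_mul, Real.log_one, mul_zero, zero_add, mul_one] at h
    have e : b / a + (a - b) / a * p = (p * a + r * b) / a := by
      rw [show r = 1 - p by linarith]
      field_simp
      ring
    rw [e] at h
    calc (a - b) * Real.log p = a * ((a - b) / a * Real.log p) := by field_simp
      _ ≤ _ := mul_le_mul_of_nonneg_left h ha.le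
  have h2 : Real.log (b / (p * a + r * b)) ≤ 0 := by
    apply Real.log_nonpos (by positivity)
    rw [div_le_one hq]
    nlinarith
  have h3 : Real.log (a / (p * a + r * b)) = -Real.log ((p * a + r * b) / a) := by
    rw [← Real.log_inv, inv_div]
  rw [h3]
  have h4 : r * b * Real.log (b / (p * a + r * b)) ≤ 0 :=
    mul_nonpos_of_nonneg_of_nonpos (by positivity) h2
  nlinarith [mul_le_mul_of_nonneg_left h1 hp.le]

/-- Both orderings of `a` and `b` in one formula: the positive part of `a - b` is weighted by
`-p log p` and the negative part by `-r log r`. -/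
lemma term_le {p r a b : ℝ} (hp : 0 < p) (hr : 0 < r) (hpr : p + r = 1)
    (ha : 0 ≤ a) (hb : 0 ≤ b) :
    p * a * Real.log (a / (p * a + r * b)) + r * b * Real.log (b / (p * a + r * b))
      ≤ -(p * Real.log p) * ((|a - b| + (a - b)) / 2)
        + -(r * Real.log r) * ((|a - b| - (a - b)) / 2) := by
  rcases le_total b a with h | h
  · rw [abs_of_nonneg (sub_nonneg.2 h)]
    linarith [term_le_of_le hp hr hpr hb h]
  · rw [abs_of_nonpos (sub_nonpos.2 h)]
    have := term_le_of_le hr hp (by linarith) ha h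
    rw [add_comm (r * b) (p * a)] at this
    linarith

/-- For density matrices `ρ₀, ρ₁` emitted with probabilities
`p₀ ≥ p₁ > 0` (`p₀ + p₁ = 1`) and any POVM `(E_e)`, with `p(e|s) = Tr(E_e ρ_s)`
and `p(e) = p₀ p(e|0) + p₁ p(e|1)`, the mutual information satisfies
`I(E;S) ≤ H(S) p₀ ‖ρ₀ - ρ₁‖₁` with `H(S) = -p₀ log p₀ - p₁ log p₁`. -/
theorem binary_quantum_mutual_info_bound {n : ℕ} {F : Type*} [Fintype F]
    (p0 p1 : ℝ) (hp1pos : 0 < p1) (hle : p1 ≤ p0) (hsum : p0 + p1 = 1)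
    (ρ0 ρ1 : Matrix (Fin n) (Fin n) ℂ)
    (hρ0 : ρ0.PosSemidef) (hρ1 : ρ1.PosSemidef)
    (hρ0tr : ρ0.trace = 1) (hρ1tr : ρ1.trace = 1)
    (E : F → Matrix (Fin n) (Fin n) ℂ)
    (hE : ∀ e, (E e).PosSemidef) (hEsum : ∑ e, E e = 1) :
    (∑ e, p0 * ((E e * ρ0).trace).re *
        Real.log (((E e * ρ0).trace).re /
          (p0 * ((E e * ρ0).trace).re + p1 * ((E e * ρ1).trace).re)) +
      ∑ e, p1 * ((E e * ρ1).trace).re *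
        Real.log (((E e * ρ1).trace).re /
          (p0 * ((E e * ρ0).trace).re + p1 * ((E e * ρ1).trace).re))) ≤
      (-(p0 * Real.log p0) - p1 * Real.log p1) * p0 * traceNorm (ρ0 - ρ1) := by
  have hD := sum_abs_trace_le_traceNorm (ρ0 - ρ1) (hρ0.1.sub hρ1.1) E hE hEsum
  simp only [Matrix.mul_sub, Matrix.trace_sub, Complex.sub_re] at hD
  have hp0 : 0 < p0 := hp1pos.trans_le hle
  have hmass : ∀ ρ : Matrix (Fin n) (Fin n) ℂ, ρ.trace = 1 →
      ∑ e, ((E e * ρ).trace).re = 1 := by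
    intro ρ hρ
    rw [← Complex.re_sum, ← Matrix.trace_sum, ← Finset.sum_mul, hEsum, one_mul, hρ]
    simp
  have ha1 := hmass ρ0 hρ0tr
  have hb1 := hmass ρ1 hρ1tr
  have ha : ∀ e, 0 ≤ ((E e * ρ0).trace).re := fun e => trace_mul_re_nonneg (hE e) hρ0
  have hb : ∀ e, 0 ≤ ((E e * ρ1).trace).re := fun e => trace_mul_re_nonneg (hE e) hρ1
  set a : F → ℝ := fun e => ((E e * ρ0).trace).re
  set b : F → ℝ := fun e => ((E e * ρ1).trace).re
  have hzero : ∑ e, (a e - b e) = 0 := by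
    rw [Finset.sum_sub_distrib]
    linarith
  have hH : 0 ≤ -(p0 * Real.log p0) - p1 * Real.log p1 := by
    have h0 := Real.log_nonpos hp0.le (by linarith)
    have h1 := Real.log_nonpos hp1pos.le (by linarith)
    nlinarith
  have hD0 : 0 ≤ ∑ e, |a e - b e| := Finset.sum_nonneg fun e _ => abs_nonneg _
  rw [← Finset.sum_add_distrib]
  calc _ ≤ ∑ e, (-(p0 * Real.log p0) * ((|a e - b e| + (a e - b e)) / 2)
        + -(p1 * Real.log p1) * ((|a e - b e| - (a e - b e)) / 2)) :=
        Finset.sum_le_sum fun e _ => term_le hp0 hp1pos hsum (ha e) (hb e)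
    _ = (-(p0 * Real.log p0) - p1 * Real.log p1) * ((∑ e, |a e - b e|) / 2) := by
        rw [Finset.sum_add_distrib, ← Finset.mul_sum, ← Finset.mul_sum, ← Finset.sum_div,
          ← Finset.sum_div, Finset.sum_add_distrib,
          Finset.sum_sub_distrib (fun e => |a e - b e|), hzero]
        ring
    _ ≤ (-(p0 * Real.log p0) - p1 * Real.log p1) * (p0 * traceNorm (ρ0 - ρ1)) := by
        refine mul_le_mul_of_nonneg_left ?_ hH
        have : ∑ e, |a e - b e| ≤ traceNorm (ρ0 - ρ1) := hD
        nlinarith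
    _ = _ := by ring
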